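/- arXiv:1207.3704 — 3 statements merged into one kernel-verified Lean document; each statement's English description precedes it below -/
import Mathlib

section
/- For every fixed T > 0, the random-scan Gibbs sampler converges geometrically fast to the Gibbs distribution: there exist constants C ≥ 0 and ρ ∈ [0,1) such that for every probability vector μ on S and every n ∈ ℕ, Σ_{s∈S} |(μ·P^n)(s) − π_T(s)| ≤ C·ρ^n, where P = (1/|U|)·Σ_{u∈U} P_u is the random-scan kernel and (μ·P^n)(s) = Σ_{s₀} μ(s₀)·P^n(s₀,s). -/
/-!
The random-scan kernel `P` is a stochastic matrix which is reversible for the Gibbs weights: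
splitting the global energy as `E(s) = E_u(s) + (a term not involving s_u)`
(`globalEnergy_sub_localEnergy`) gives detailed balance for each heat-bath kernel, hence
`π_T P = π_T`. Every heat-bath transition changing a single coordinate has positive probability, so
any configuration can be reached from any other by updating the sites one after the other; thus
`P ^ |U|` has only positive entries (`randomScan_pow_pos`).

Doeblin's argument then finishes the proof (`geometric_of_pow_pos`): if all entries of a stochastic
matrix `Q` are at least `δ > 0`, then `Q` contracts the `ℓ¹`-norm of row vectors of total mass zero
by the factor `1 - |I| δ`, because subtracting the constant `δ` from each entry of `Q` does not
change its action on such vectors. Apply this to `Q = P ^ |U|` and the vector `μ - π_T`.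
-/

open Finset Real

/-- The local energy of user `u` in configuration `s`:
`E_u(s) = φ_u(s_u) + Σ_{v ≠ u} φ_{uv}(s_u, s_v)`. -/
noncomputable def localEnergy {U : Type*} [Fintype U] [DecidableEq U] {S : U → Type*}
    (φ1 : ∀ u, S u → ℝ) (φ2 : ∀ u v, S u → S v → ℝ) (u : U) (s : ∀ v, S v) : ℝ :=
  φ1 u (s u) + ∑ v ∈ Finset.univ.erase u, φ2 u v (s u) (s v)

/-- The global energy:
`E(s) = Σ_u φ_u(s_u) + Σ_{unordered pairs {u,v}, u ≠ v} φ_{uv}(s_u, s_v)`,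
where (thanks to the symmetry of `φ2`) the sum over unordered pairs is
half the sum over ordered pairs of distinct indices. -/
noncomputable def globalEnergy {U : Type*} [Fintype U] [DecidableEq U] {S : U → Type*}
    (φ1 : ∀ u, S u → ℝ) (φ2 : ∀ u v, S u → S v → ℝ) (s : ∀ v, S v) : ℝ :=
  ∑ u, φ1 u (s u) + (1 / 2) * ∑ u, ∑ v ∈ Finset.univ.erase u, φ2 u v (s u) (s v)


/-- The Gibbs distribution at temperature `T`:
`π_T(s) = exp(−E(s)/T) / Z_T` with `Z_T = Σ_s exp(−E(s)/T)`. -/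
noncomputable def gibbsDist {U : Type*} [Fintype U] [DecidableEq U] {S : U → Type*}
    [∀ u, Fintype (S u)]
    (φ1 : ∀ u, S u → ℝ) (φ2 : ∀ u v, S u → S v → ℝ) (T : ℝ) (s : ∀ v, S v) : ℝ :=
  Real.exp (-(globalEnergy φ1 φ2 s) / T) /
    ∑ s' : ∀ v, S v, Real.exp (-(globalEnergy φ1 φ2 s') / T)

/-- The heat-bath update kernel at site `u` and temperature `T`:
`P_u(s,s') = exp(−E_u(s')/T) / Σ_{a∈S_u} exp(−E_u(s[u:=a])/T)` if `s'` agrees with `s` off `u`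
(i.e. `s' = s[u:=a]` for some `a ∈ S_u`), and `P_u(s,s') = 0` otherwise. -/
noncomputable def heatBath {U : Type*} [Fintype U] [DecidableEq U] {S : U → Type*}
    [∀ u, Fintype (S u)] [∀ u, DecidableEq (S u)]
    (φ1 : ∀ u, S u → ℝ) (φ2 : ∀ u v, S u → S v → ℝ) (T : ℝ) (u : U)
    (s s' : ∀ v, S v) : ℝ :=
  if ∀ v, v ≠ u → s' v = s v then
    Real.exp (-(localEnergy φ1 φ2 u s') / T) /
      ∑ a : S u, Real.exp (-(localEnergy φ1 φ2 u (Function.update s u a)) / T)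
  else 0

/-- The random-scan Gibbs sampler kernel `P = (1/|U|)·Σ_{u∈U} P_u`. -/
noncomputable def randomScan {U : Type*} [Fintype U] [DecidableEq U] {S : U → Type*}
    [∀ u, Fintype (S u)] [∀ u, DecidableEq (S u)]
    (φ1 : ∀ u, S u → ℝ) (φ2 : ∀ u v, S u → S v → ℝ) (T : ℝ)
    (s s' : ∀ v, S v) : ℝ :=
  (1 / (Fintype.card U : ℝ)) * ∑ u, heatBath φ1 φ2 T u s s'

/-- Doeblin's contraction for row vectors of total mass zero. -/
lemma sum_abs_vecMul_le {I : Type*} [Fintype I] (Q : Matrix I I ℝ) (δ : ℝ)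
    (hQ : ∀ i j, δ ≤ Q i j) (hrow : ∀ i, ∑ j, Q i j = 1) (f : I → ℝ) (hf : ∑ i, f i = 0) :
    ∑ j, |Matrix.vecMul f Q j| ≤ (1 - Fintype.card I * δ) * ∑ i, |f i| := by
  have h1 : ∀ j, Matrix.vecMul f Q j = ∑ i, f i * (Q i j - δ) := by
    intro j
    simp only [mul_sub, Finset.sum_sub_distrib, ← Finset.sum_mul, hf, Matrix.vecMul, dotProduct]
    ring
  calc ∑ j, |Matrix.vecMul f Q j| ≤ ∑ j, ∑ i, |f i| * (Q i j - δ) := by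
        refine Finset.sum_le_sum fun j _ => ?_
        rw [h1]
        refine (Finset.abs_sum_le_sum_abs _ _).trans (Finset.sum_le_sum fun i _ => ?_)
        rw [abs_mul, abs_of_nonneg (sub_nonneg.2 (hQ i j))]
    _ = (1 - Fintype.card I * δ) * ∑ i, |f i| := by
        rw [Finset.sum_comm, Finset.mul_sum]
        refine Finset.sum_congr rfl fun i _ => ?_
        rw [← Finset.mul_sum, Finset.sum_sub_distrib, hrow]
        simp [mul_comm]

lemma row_sum_pow {I : Type*} [Fintype I] [DecidableEq I] (P : Matrix I I ℝ)
    (hrow : ∀ i, ∑ j, P i j = 1) (n : ℕ) (i : I) : ∑ j, (P ^ n) i j = 1 := by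
  induction n generalizing i with
  | zero => simp [Matrix.one_apply]
  | succ k ih =>
    simp only [pow_succ', Matrix.mul_apply]
    rw [Finset.sum_comm]
    simp only [← Finset.mul_sum, ih, mul_one, hrow]

lemma pow_nonneg_entries {I : Type*} [Fintype I] [DecidableEq I] (P : Matrix I I ℝ)
    (hP : ∀ i j, 0 ≤ P i j) (n : ℕ) (i j : I) : 0 ≤ (P ^ n) i j := by
  induction n generalizing i with
  | zero => rw [pow_zero, Matrix.one_apply]; split_ifs <;> norm_num
  | succ k ih =>
    rw [pow_succ', Matrix.mul_apply]
    exact Finset.sum_nonneg fun l _ => mul_nonneg (hP i l) (ih l)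

lemma vecMul_pow_of_stationary {I : Type*} [Fintype I] [DecidableEq I] (P : Matrix I I ℝ)
    (p : I → ℝ) (hp : Matrix.vecMul p P = p) (n : ℕ) : Matrix.vecMul p (P ^ n) = p := by
  induction n with
  | zero => simp
  | succ k ih => rw [pow_succ', ← Matrix.vecMul_vecMul, hp, ih]

/-- A stochastic matrix some power of which has only positive entries converges geometrically fast
in `ℓ¹` to its stationary distribution, uniformly in the initial distribution. -/
lemma geometric_of_pow_pos {I : Type*} [Fintype I] [DecidableEq I] [Nonempty I]
    (P : Matrix I I ℝ) (hP : ∀ i j, 0 ≤ P i j) (hrow : ∀ i, ∑ j, P i j = 1)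
    (N : ℕ) (hN : 0 < N) (hpos : ∀ i j, 0 < (P ^ N) i j)
    (p : I → ℝ) (hp0 : ∀ i, 0 ≤ p i) (hp1 : ∑ i, p i = 1) (hp : Matrix.vecMul p P = p) :
    ∃ C : ℝ, 0 ≤ C ∧ ∃ ρ : ℝ, 0 ≤ ρ ∧ ρ < 1 ∧
      ∀ μ : I → ℝ, (∀ i, 0 ≤ μ i) → (∑ i, μ i = 1) → ∀ n : ℕ,
        ∑ j, |(∑ i, μ i * (P ^ n) i j) - p j| ≤ C * ρ ^ n := by
  obtain ⟨⟨i₀, j₀⟩, hmin⟩ := Finite.exists_min fun x : I × I => (P ^ N) x.1 x.2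
  -- Half of the least entry, so that the contraction factor `α` is positive.
  set δ : ℝ := (P ^ N) i₀ j₀ / 2 with hδ
  have hδ0 : 0 < δ := half_pos (hpos _ _)
  have hδle : ∀ i j, 2 * δ ≤ (P ^ N) i j := fun i j => by
    have := hmin (i, j)
    simp only at this
    linarith
  have hcard : (0 : ℝ) < Fintype.card I := by exact_mod_cast Fintype.card_pos
  set α : ℝ := 1 - Fintype.card I * δ with hα
  have hα1 : α < 1 := by have := mul_pos hcard hδ0; linarith
  have hα0 : 0 < α := by
    have h : ∑ _j : I, 2 * δ ≤ ∑ j, (P ^ N) i₀ j := Finset.sum_le_sum fun j _ => hδle i₀ j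
    rw [row_sum_pow P hrow] at h
    simp only [Finset.sum_const, Finset.card_univ, nsmul_eq_mul] at h
    nlinarith
  set ρ : ℝ := α ^ ((N : ℝ)⁻¹) with hρ
  have hρN : ρ ^ N = α := Real.rpow_inv_natCast_pow hα0.le hN.ne'
  have hρ0 : 0 < ρ := Real.rpow_pos_of_pos hα0 _
  have hρ1 : ρ < 1 := Real.rpow_lt_one hα0.le hα1 (by positivity)
  refine ⟨2 / α, by positivity, ρ, hρ0.le, hρ1, fun μ hμ0 hμ1 n => ?_⟩
  have hf : ∑ i, (μ - p) i = 0 := by simp [Finset.sum_sub_distrib, hμ1, hp1]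
  have hmass : ∀ (m : ℕ), ∑ j, Matrix.vecMul (μ - p) (P ^ m) j = 0 := by
    intro m
    simp only [Matrix.vecMul, dotProduct]
    rw [Finset.sum_comm]
    simp only [← Finset.mul_sum, row_sum_pow P hrow, mul_one, hf]
  have hf2 : ∑ i, |(μ - p) i| ≤ 2 := by
    calc ∑ i, |(μ - p) i| ≤ ∑ i, (μ i + p i) := Finset.sum_le_sum fun i _ => by
          rw [Pi.sub_apply, abs_le]
          constructor <;> linarith [hμ0 i, hp0 i]
      _ = 2 := by rw [Finset.sum_add_distrib, hμ1, hp1]; norm_num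
  have hblock : ∀ k : ℕ, ∑ j, |Matrix.vecMul (μ - p) (P ^ (N * k)) j| ≤ α ^ k * 2 := by
    intro k
    induction k with
    | zero => simpa using hf2
    | succ k ih =>
      rw [Nat.mul_succ, pow_add, ← Matrix.vecMul_vecMul]
      refine (sum_abs_vecMul_le (P ^ N) δ (fun i j => by linarith [hδle i j])
        (row_sum_pow P hrow N) _ (hmass _)).trans ?_
      rw [pow_succ', mul_assoc]
      exact mul_le_mul_of_nonneg_left ih hα0.le
  have hn : ∑ j, |Matrix.vecMul (μ - p) (P ^ n) j| ≤ α ^ (n / N) * 2 := by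
    conv_lhs => rw [← Nat.div_add_mod n N]
    rw [pow_add, ← Matrix.vecMul_vecMul]
    refine le_trans ?_ (hblock (n / N))
    -- The remaining `n % N` steps do not increase the norm.
    have := sum_abs_vecMul_le (P ^ (n % N)) 0 (pow_nonneg_entries P hP _)
      (row_sum_pow P hrow _) _ (hmass (N * (n / N)))
    simpa using this
  have hconv : ∀ j, (∑ i, μ i * (P ^ n) i j) - p j = Matrix.vecMul (μ - p) (P ^ n) j := by
    intro j
    rw [Matrix.sub_vecMul, vecMul_pow_of_stationary P p hp]
    rfl
  simp only [hconv]
  refine hn.trans ?_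
  have hsplit : ρ ^ n = α ^ (n / N) * ρ ^ (n % N) := by
    rw [← hρN, ← pow_mul, ← pow_add, Nat.div_add_mod]
  have hmod : α ≤ ρ ^ (n % N) := by
    rw [← hρN]
    exact pow_le_pow_of_le_one hρ0.le hρ1.le (Nat.mod_lt n hN).le
  rw [hsplit, div_mul_eq_mul_div, le_div_iff₀ hα0]
  nlinarith [mul_le_mul_of_nonneg_left hmod (pow_nonneg hα0.le (n / N))]

section Gibbs

variable {U : Type*} [Fintype U] [DecidableEq U] {S : U → Type*}
  (φ1 : ∀ u, S u → ℝ) (φ2 : ∀ u v, S u → S v → ℝ)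

/-- The part of the global energy outside the local energy of `u` does not involve the state
of `u`. -/
lemma globalEnergy_sub_localEnergy
    (hsym : ∀ u v (a : S u) (b : S v), φ2 u v a b = φ2 v u b a) (u : U) (s : ∀ v, S v) :
    globalEnergy φ1 φ2 s - localEnergy φ1 φ2 u s =
      ∑ v ∈ Finset.univ.erase u, φ1 v (s v) + (1 / 2) * ∑ v ∈ Finset.univ.erase u,
        ∑ w ∈ (Finset.univ.erase v).erase u, φ2 v w (s v) (s w) := by
  have h2 : ∀ v ∈ Finset.univ.erase u, ∑ w ∈ Finset.univ.erase v, φ2 v w (s v) (s w) =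
      φ2 u v (s u) (s v) + ∑ w ∈ (Finset.univ.erase v).erase u, φ2 v w (s v) (s w) := by
    intro v hv
    rw [hsym u v, Finset.add_sum_erase (Finset.univ.erase v) (fun w => φ2 v w (s v) (s w))]
    exact Finset.mem_erase.2 ⟨(Finset.ne_of_mem_erase hv).symm, Finset.mem_univ _⟩
  unfold globalEnergy localEnergy
  rw [← Finset.add_sum_erase Finset.univ (fun v => φ1 v (s v)) (Finset.mem_univ u),
    ← Finset.add_sum_erase Finset.univ
      (fun v => ∑ w ∈ Finset.univ.erase v, φ2 v w (s v) (s w)) (Finset.mem_univ u),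
    Finset.sum_congr rfl h2, Finset.sum_add_distrib]
  ring

lemma globalEnergy_add_localEnergy_comm
    (hsym : ∀ u v (a : S u) (b : S v), φ2 u v a b = φ2 v u b a) (u : U) (s s' : ∀ v, S v)
    (h : ∀ v, v ≠ u → s' v = s v) :
    globalEnergy φ1 φ2 s + localEnergy φ1 φ2 u s' =
      globalEnergy φ1 φ2 s' + localEnergy φ1 φ2 u s := by
  have h1 := globalEnergy_sub_localEnergy φ1 φ2 hsym u s
  have h2 := globalEnergy_sub_localEnergy φ1 φ2 hsym u s'
  have e1 : ∑ v ∈ Finset.univ.erase u, φ1 v (s' v) = ∑ v ∈ Finset.univ.erase u, φ1 v (s v) :=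
    Finset.sum_congr rfl fun v hv => by rw [h v (Finset.ne_of_mem_erase hv)]
  have e2 : ∑ v ∈ Finset.univ.erase u, ∑ w ∈ (Finset.univ.erase v).erase u, φ2 v w (s' v) (s' w) =
      ∑ v ∈ Finset.univ.erase u, ∑ w ∈ (Finset.univ.erase v).erase u, φ2 v w (s v) (s w) :=
    Finset.sum_congr rfl fun v hv => Finset.sum_congr rfl fun w hw => by
      rw [h v (Finset.ne_of_mem_erase hv), h w (Finset.ne_of_mem_erase hw)]
  rw [e1, e2] at h2
  linarith

variable [∀ u, Fintype (S u)] [∀ u, DecidableEq (S u)] (T : ℝ)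

lemma heatBath_nonneg (u : U) (s s' : ∀ v, S v) : 0 ≤ heatBath φ1 φ2 T u s s' := by
  unfold heatBath
  split_ifs <;> positivity

lemma heatBath_pos [∀ u, Nonempty (S u)] (u : U) (s s' : ∀ v, S v)
    (h : ∀ v, v ≠ u → s' v = s v) : 0 < heatBath φ1 φ2 T u s s' := by
  unfold heatBath
  rw [if_pos h]
  exact div_pos (Real.exp_pos _) (Finset.sum_pos (fun _ _ => Real.exp_pos _) Finset.univ_nonempty)

lemma heatBath_row_sum [∀ u, Nonempty (S u)] (u : U) (s : ∀ v, S v) :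
    ∑ s', heatBath φ1 φ2 T u s s' = 1 := by
  have hZ : 0 < ∑ a : S u, Real.exp (-(localEnergy φ1 φ2 u (Function.update s u a)) / T) :=
    Finset.sum_pos (fun _ _ => Real.exp_pos _) Finset.univ_nonempty
  have key : ∑ a : S u, heatBath φ1 φ2 T u s (Function.update s u a) =
      ∑ s', heatBath φ1 φ2 T u s s' := by
    refine Finset.sum_of_injOn (fun a => Function.update s u a)
      (Function.update_injective s u).injOn (by simp) ?_ (fun _ _ => rfl)
    intro s' _ hs'
    unfold heatBath
    rw [if_neg]
    intro h
    exact hs' ⟨s' u, by simp, (Function.eq_update_iff.2 ⟨rfl, h⟩).symm⟩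
  rw [← key]
  unfold heatBath
  have hagree : ∀ a, ∀ v, v ≠ u → Function.update s u a v = s v :=
    fun a v hv => Function.update_of_ne hv _ _
  simp only [if_pos (hagree _)]
  rw [← Finset.sum_div, div_self hZ.ne']

/-- Detailed balance of the heat-bath kernel with respect to the Gibbs weights. -/
lemma heatBath_reversible
    (hsym : ∀ u v (a : S u) (b : S v), φ2 u v a b = φ2 v u b a) (u : U) (s s' : ∀ v, S v) :
    gibbsDist φ1 φ2 T s * heatBath φ1 φ2 T u s s' =
      gibbsDist φ1 φ2 T s' * heatBath φ1 φ2 T u s' s := by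
  by_cases h : ∀ v, v ≠ u → s' v = s v
  · have h' : ∀ v, v ≠ u → s v = s' v := fun v hv => (h v hv).symm
    have hupd : ∀ a, Function.update s' u a = Function.update s u a := by
      intro a
      ext v
      by_cases hv : v = u
      · subst hv; simp
      · simp [hv, h v hv]
    have hE := globalEnergy_add_localEnergy_comm φ1 φ2 hsym u s s' h
    unfold gibbsDist heatBath
    rw [if_pos h, if_pos h', div_mul_div_comm, div_mul_div_comm]
    simp only [hupd]
    rw [← Real.exp_add, ← Real.exp_add, ← add_div, ← add_div, ← neg_add, ← neg_add, hE]
  · have h' : ¬ ∀ v, v ≠ u → s v = s' v := fun h' => h fun v hv => (h' v hv).symm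
    unfold heatBath
    rw [if_neg h, if_neg h', mul_zero, mul_zero]

lemma randomScan_nonneg (s s' : ∀ v, S v) : 0 ≤ randomScan φ1 φ2 T s s' :=
  mul_nonneg (by positivity) (Finset.sum_nonneg fun u _ => heatBath_nonneg φ1 φ2 T u s s')

lemma randomScan_row_sum [Nonempty U] [∀ u, Nonempty (S u)] (s : ∀ v, S v) :
    ∑ s', randomScan φ1 φ2 T s s' = 1 := by
  unfold randomScan
  rw [← Finset.mul_sum, Finset.sum_comm]
  simp [heatBath_row_sum]

lemma randomScan_reversible
    (hsym : ∀ u v (a : S u) (b : S v), φ2 u v a b = φ2 v u b a) (s s' : ∀ v, S v) :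
    gibbsDist φ1 φ2 T s * randomScan φ1 φ2 T s s' =
      gibbsDist φ1 φ2 T s' * randomScan φ1 φ2 T s' s := by
  unfold randomScan
  simp only [heatBath_reversible φ1 φ2 T hsym _ s s', mul_left_comm (gibbsDist φ1 φ2 T _),
    Finset.mul_sum]

/-- Updating the sites of `A` one after the other leads from `s` to any configuration that agrees
with `s` off `A`. -/
lemma randomScan_pow_pos [Nonempty U] [∀ u, Nonempty (S u)] (A : Finset U) (s s' : ∀ v, S v)
    (h : ∀ v, v ∉ A → s' v = s v) :
    0 < ((Matrix.of (randomScan φ1 φ2 T) : Matrix (∀ v, S v) (∀ v, S v) ℝ) ^ A.card) s s' := by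
  induction A using Finset.induction_on generalizing s with
  | empty =>
    have : s' = s := funext fun v => h v (by simp)
    simp [this]
  | insert u A hu ih =>
    rw [Finset.card_insert_of_notMem hu, pow_succ', Matrix.mul_apply]
    refine lt_of_lt_of_le ?_ (Finset.single_le_sum (f := fun m => Matrix.of (randomScan φ1 φ2 T) s m
      * ((Matrix.of (randomScan φ1 φ2 T) : Matrix (∀ v, S v) (∀ v, S v) ℝ) ^ A.card) m s')
      (fun m _ => mul_nonneg (randomScan_nonneg φ1 φ2 T s m)
        (pow_nonneg_entries _ (randomScan_nonneg φ1 φ2 T) _ _ _))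
      (Finset.mem_univ (Function.update s u (s' u))))
    refine mul_pos ?_ (ih _ fun v hv => ?_)
    · refine mul_pos (by positivity) (Finset.sum_pos' (fun w _ => heatBath_nonneg φ1 φ2 T w _ _)
        ⟨u, Finset.mem_univ u, heatBath_pos φ1 φ2 T u _ _ fun v hv => ?_⟩)
      exact Function.update_of_ne hv _ _
    · by_cases hvu : v = u
      · subst hvu; simp
      · rw [Function.update_of_ne hvu]
        exact h v (by simp [hvu, hv])

end Gibbs

/-- For every fixed `T > 0`, the random-scan Gibbs sampler converges geometrically fast to
the Gibbs distribution: there exist `C ≥ 0` and `ρ ∈ [0,1)` such that for every probability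
vector `μ` on the configuration space and every `n`,
`Σ_s |(μ·P^n)(s) − π_T(s)| ≤ C·ρ^n`. -/
theorem randomScan_geometric_convergence
    {U : Type*} [Fintype U] [DecidableEq U] [Nonempty U]
    {S : U → Type*} [∀ u, Fintype (S u)] [∀ u, Nonempty (S u)] [∀ u, DecidableEq (S u)]
    (φ1 : ∀ u, S u → ℝ) (φ2 : ∀ u v, S u → S v → ℝ)
    (hsym : ∀ u v (a : S u) (b : S v), φ2 u v a b = φ2 v u b a)
    (T : ℝ) (hT : 0 < T) :
    ∃ C : ℝ, 0 ≤ C ∧ ∃ ρ : ℝ, 0 ≤ ρ ∧ ρ < 1 ∧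
      ∀ μ : (∀ v, S v) → ℝ, (∀ s, 0 ≤ μ s) → (∑ s, μ s = 1) →
        ∀ n : ℕ,
          ∑ s : ∀ v, S v,
            |(∑ s₀ : ∀ v, S v,
                μ s₀ * ((Matrix.of (randomScan φ1 φ2 T) : Matrix (∀ v, S v) (∀ v, S v) ℝ) ^ n) s₀ s)
              - gibbsDist φ1 φ2 T s| ≤ C * ρ ^ n := by
  have hZ : 0 < ∑ s : ∀ v, S v, Real.exp (-(globalEnergy φ1 φ2 s) / T) :=
    Finset.sum_pos (fun _ _ => Real.exp_pos _) Finset.univ_nonempty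
  refine geometric_of_pow_pos (Matrix.of (randomScan φ1 φ2 T)) (randomScan_nonneg φ1 φ2 T)
    (randomScan_row_sum φ1 φ2 T) (Finset.univ : Finset U).card
    (Finset.card_pos.2 Finset.univ_nonempty)
    (fun s s' => randomScan_pow_pos φ1 φ2 T Finset.univ s s' fun v hv =>
      absurd (Finset.mem_univ v) hv)
    (gibbsDist φ1 φ2 T) (fun s => div_nonneg (Real.exp_pos _).le hZ.le) ?_ ?_
  · unfold gibbsDist
    rw [← Finset.sum_div, div_self hZ.ne']
  · ext s'
    simp only [Matrix.vecMul, dotProduct, Matrix.of_apply]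
    rw [Finset.sum_congr rfl fun s _ => randomScan_reversible φ1 φ2 T hsym s s',
      ← Finset.mul_sum, randomScan_row_sum, mul_one]
end

section
/- Let X be a nonempty finite set and E : X → ℝ a function, and for T > 0 let π_T(x) = exp(−E(x)/T)/Σ_{y∈X} exp(−E(y)/T). Let M = {x ∈ X : E(x) = min_{y∈X} E(y)} be the set of minimizers of E. Then as T → 0⁺, π_T(x) converges to 1/|M| if x ∈ M and to 0 otherwise; i.e., π_T converges pointwise to the uniform distribution on the set of global minimizers of E. -/
open Finset Filter

/-!
With `m = min E`, multiplying numerator and denominator by `exp (m / T)` rewrites the Gibbs weight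
as `exp (-(E x - m) / T) / ∑ y, exp (-(E y - m) / T)`. As `T → 0⁺`, each normalized weight tends to
the indicator of `E x = m` (`tendsto_exp_neg_div`), so the denominator tends to the number of
minimizers. This number is nonzero because `X` is finite and nonempty, so the quotient converges.
-/

/-- The Boltzmann factor of an energy gap `d ≥ 0` tends, as `T → 0⁺`, to `1` if the gap vanishes
and to `0` otherwise. -/
lemma tendsto_exp_neg_div {d : ℝ} (hd : 0 ≤ d) :
    Tendsto (fun T : ℝ => Real.exp (-d / T)) (nhdsWithin 0 (Set.Ioi 0))
      (nhds (if d = 0 then 1 else 0)) := by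
  rcases hd.eq_or_lt with rfl | hpos
  · simp
  · rw [if_neg hpos.ne']
    have hdiv : Tendsto (fun T : ℝ => -d / T) (nhdsWithin 0 (Set.Ioi 0)) atBot := by
      simp only [div_eq_mul_inv]
      exact tendsto_inv_nhdsGT_zero.const_mul_atTop_of_neg (neg_lt_zero.mpr hpos)
    exact Real.tendsto_exp_atBot.comp hdiv

/-- Let `X` be a nonempty finite set, `E : X → ℝ`, and for `T > 0` let
`π_T(x) = exp(−E(x)/T)/Σ_y exp(−E(y)/T)`. As `T → 0⁺`, `π_T(x)` converges to `1/|M|` if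
`x` is a global minimizer of `E` (where `M` is the set of global minimizers) and to `0`
otherwise; i.e. `π_T` converges pointwise to the uniform distribution on the minimizers. -/
theorem gibbs_tendsto_uniform_on_minimizers
    {X : Type*} [Fintype X] [Nonempty X] (E : X → ℝ) (x : X) :
    Filter.Tendsto
      (fun T : ℝ => Real.exp (-(E x) / T) / ∑ y, Real.exp (-(E y) / T))
      (nhdsWithin 0 (Set.Ioi 0))
      (nhds (if E x = Finset.univ.inf' Finset.univ_nonempty E then
          (1 : ℝ) /
            (Finset.univ.filter (fun y => E y = Finset.univ.inf' Finset.univ_nonempty E)).card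
        else 0)) := by
  set m := Finset.univ.inf' Finset.univ_nonempty E with hm
  have hlim (y : X) : Tendsto (fun T : ℝ => Real.exp (-(E y - m) / T))
      (nhdsWithin 0 (Set.Ioi 0)) (nhds (if E y = m then 1 else 0)) := by
    simpa only [sub_eq_zero] using
      tendsto_exp_neg_div (sub_nonneg.mpr (Finset.inf'_le E (Finset.mem_univ y)))
  have hsum : Tendsto (fun T : ℝ => ∑ y, Real.exp (-(E y - m) / T))
      (nhdsWithin 0 (Set.Ioi 0)) (nhds ((Finset.univ.filter (fun y => E y = m)).card : ℝ)) := by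
    simpa only [Finset.sum_boole] using tendsto_finsetSum Finset.univ fun y _ => hlim y
  have hcard : ((Finset.univ.filter (fun y => E y = m)).card : ℝ) ≠ 0 := by
    obtain ⟨y, -, hy⟩ := Finset.exists_mem_eq_inf' Finset.univ_nonempty E
    have hmem : y ∈ Finset.univ.filter (fun y => E y = m) := by simp [hm, hy]
    exact Nat.cast_ne_zero.mpr (Finset.card_ne_zero_of_mem hmem)
  have hquot := (hlim x).div hsum hcard
  rw [ite_div, zero_div] at hquot
  refine hquot.congr fun T => ?_
  -- The shift by `m` contributes the same factor `exp (m / T)` to every weight.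
  have hshift (y : X) : Real.exp (-(E y - m) / T) = Real.exp (-(E y) / T) * Real.exp (m / T) := by
    rw [← Real.exp_add]
    ring_nf
  simp only [Pi.div_apply, hshift, ← Finset.sum_mul]
  exact mul_div_mul_right _ _ (Real.exp_ne_zero _)
end

section
/- With SINR_u = P_u·l(b_u,u,c_u) / (N_u(c_u) + Σ_{v≠u} α(b_u,b_v,c_u,c_v)·P_v·l(b_v,u,c_v)), the global energy E = Σ_{u∈U} 1/SINR_u can be rewritten as a sum of singleton and symmetric pairwise terms: E = Σ_{u∈U} N_u(c_u)/(P_u·l(b_u,u,c_u)) + Σ_{unordered pairs {u,v}⊂U} [ α(b_u,b_v,c_u,c_v)·P_v·l(b_v,u,c_v)/(P_u·l(b_u,u,c_u)) + α(b_v,b_u,c_v,c_u)·P_u·l(b_u,v,c_u)/(P_v·l(b_v,v,c_v)) ]. -/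
open Finset

/-! Inverting each `SINR_u` splits `E` into the singleton terms plus the sum over ordered pairs
`(u, v)`, `u ≠ v`, of the first half of the bracket. The second half is the first with `u` and `v`
exchanged, so the bracket sums to twice that value over ordered pairs, which the factor `1 / 2`
compensates. -/

/-- With `SINR_u = P_u·l(b_u,u,c_u) / (N_u(c_u) + Σ_{v≠u} α(b_u,b_v,c_u,c_v)·P_v·l(b_v,u,c_v))`,
the global energy `E = Σ_u 1/SINR_u` can be rewritten as a sum of singleton terms and
symmetric pairwise terms: `E = Σ_u N_u(c_u)/(P_u·l(b_u,u,c_u)) + Σ_{unordered {u,v}}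
[α(b_u,b_v,c_u,c_v)·P_v·l(b_v,u,c_v)/(P_u·l(b_u,u,c_u)) +
 α(b_v,b_u,c_v,c_u)·P_u·l(b_u,v,c_u)/(P_v·l(b_v,v,c_v))]`, where the sum over unordered
pairs of distinct users is half the corresponding sum over ordered pairs (the bracketed
term being symmetric in `u` and `v`). -/
theorem globalEnergy_eq_singleton_add_pairwise
    {U : Type*} [Fintype U] [Nonempty U] [DecidableEq U] {B C : Type*}
    (b : U → B) (c : U → C) (P : U → ℝ) (hP : ∀ u, 0 < P u)
    (N : U → C → ℝ) (hN : ∀ u ch, 0 < N u ch)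
    (l : B → U → C → ℝ) (hl : ∀ bs u ch, 0 < l bs u ch)
    (α : B → B → C → C → ℝ) (hα : ∀ b1 b2 c1 c2, 0 ≤ α b1 b2 c1 c2)
    (hαsym : ∀ b1 b2 c1 c2, α b1 b2 c1 c2 = α b2 b1 c2 c1)
    (SINR : U → ℝ)
    (hSINR : ∀ u, SINR u =
      P u * l (b u) u (c u) /
        (N u (c u) + ∑ v ∈ Finset.univ.erase u,
          α (b u) (b v) (c u) (c v) * P v * l (b v) u (c v))) :
    ∑ u, 1 / SINR u
      = ∑ u, N u (c u) / (P u * l (b u) u (c u))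
        + (1 / 2) * ∑ u, ∑ v ∈ Finset.univ.erase u,
            (α (b u) (b v) (c u) (c v) * P v * l (b v) u (c v) / (P u * l (b u) u (c u))
              + α (b v) (b u) (c v) (c u) * P u * l (b u) v (c u) / (P v * l (b v) v (c v))) := by
  -- exchanging `u` and `v` shows that both halves of the bracket have the same double sum
  have hswap : ∑ u, ∑ v ∈ Finset.univ.erase u,
        α (b v) (b u) (c v) (c u) * P u * l (b u) v (c u) / (P v * l (b v) v (c v))
      = ∑ u, ∑ v ∈ Finset.univ.erase u,
        α (b u) (b v) (c u) (c v) * P v * l (b v) u (c v) / (P u * l (b u) u (c u)) :=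
    Finset.sum_comm' fun u v => by simp [ne_comm]
  simp only [hSINR, one_div_div, add_div, Finset.sum_div, Finset.sum_add_distrib]
  rw [hswap]
  ring
end
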